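/- Let m, n ≥ 1 be integers, let D = (m−1)(n−1), and let z₀ = n/gcd(m,n). Then there exist real numbers c₀, c₁, …, c_D such that for every positive integer z: if z₀ divides z, then H_{m,n}(z) = Σ_{i=0}^{D} c_i · z^{D−i}, and if z₀ does not divide z, then H_{m,n}(z) = 0. -/

import Mathlib

/-!
Write `g = gcd m n`, `z₀ = n / g`, `s = m / g`. If `H z ≠ 0`, then `n ∣ z * m`, hence `z₀ ∣ z`; and for
`z = t * z₀` the number `H z` counts the lattice points of the `t`-th dilate of the polytope of
`m × n` matrices with row sums `z₀` and column sums `s`. It remains to see that this count agrees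
with a polynomial in `t` for all `t ≥ 1`, of degree at most `(m - 1) * (n - 1)`.

Cut the dilate by the hyperplanes `A i j = t * k`, `k` an integer. A lattice point `A` lies in the
cell given by its quotients `f i j = A i j / t`, and inside the cell it has coordinates
`x = (A % t, t - A % t)`, which satisfy linear equations and `x ≥ 0`. Stratify a cell by the support
`Z` of `x`, and let `N_Z t` be the number of points of the stratum. By integrality of bipartite
flows (`exists_rounding`), whenever a stratum has a point for some `t ≥ 1`, the cell contains for
`t = 1` a `0/1`-point `v` with support inside `Z`. Subtracting `v` maps the stratum of `Z` at `t + 1`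
bijectively onto the union of the strata of all `W` with `Z \ supp v ⊆ W ⊆ Z` at `t`. So
`N_Z (t + 1) - N_Z t` is a sum of `N_W t` with `W` strictly smaller than `Z`, and by induction on `Z`
it is a polynomial in `t ≥ 1`; hence so is `N_Z` (`strata_poly`). Summing over the finitely many cells
and strata gives `dilate_poly`.

A matrix with prescribed line sums is determined by its upper left `(m - 1) × (n - 1)` block, so the
count is at most `(t * z₀ + 1) ^ ((m - 1) * (n - 1))`, which bounds the degree of the polynomial.
-/

/-! ### Polynomial recursions and strata -/

open Polynomial in
/-- Polynomials admit discrete antiderivatives; on monomials these are Bernoulli polynomials. -/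
theorem exists_antidifference (q : ℚ[X]) :
    ∃ p : ℚ[X], ∀ x : ℚ, p.eval (x + 1) = p.eval x + q.eval x := by
  induction q using Polynomial.induction_on' with
  | add p q hp hq =>
    obtain ⟨p', hp'⟩ := hp
    obtain ⟨q', hq'⟩ := hq
    refine ⟨p' + q', fun x => ?_⟩
    simp only [eval_add, hp', hq']
    ring
  | monomial k a =>
    refine ⟨C (a / (k + 1)) * Polynomial.bernoulli (k + 1), fun x => ?_⟩
    have h := Polynomial.bernoulli_eval_one_add (k + 1) x
    have hk : (k : ℚ) + 1 ≠ 0 := by positivity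
    rw [add_comm x 1, eval_mul, eval_mul, h, eval_C, eval_monomial]
    push_cast
    rw [eval_C]
    field_simp

open Polynomial in
theorem exists_poly_of_recursion (N : ℕ → ℚ) (q : ℚ[X])
    (h : ∀ t : ℕ, 1 ≤ t → N (t + 1) = N t + q.eval (t : ℚ)) :
    ∃ p : ℚ[X], ∀ t : ℕ, 1 ≤ t → N t = p.eval (t : ℚ) := by
  obtain ⟨p, hp⟩ := exists_antidifference q
  refine ⟨p + C (N 1 - p.eval 1), fun t ht => ?_⟩
  induction t, ht using Nat.le_induction with
  | base => simp
  | succ t ht ih =>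
    rw [h t ht, ih]
    simp only [eval_add, eval_C, Nat.cast_add, Nat.cast_one, hp]
    ring

/-- The support of a vector, as a finset. -/
def vecSupp {ι : Type*} [Fintype ι] (x : ι → ℕ) : Finset ι := Finset.univ.filter (x · ≠ 0)

theorem mem_vecSupp {ι : Type*} [Fintype ι] {x : ι → ℕ} {i : ι} : i ∈ vecSupp x ↔ x i ≠ 0 := by
  simp [vecSupp]

open Polynomial in
/-- Let `S t` be a graded family of vectors in which adding or removing an element of `S 1` shifts
the degree by one, and such that every `x ∈ S t`, `t ≥ 1`, has in its support the support of some
`0/1`-vector in `S 1`. Then for `t ≥ 1` the number of elements of `S t` with given support `Z` is a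
polynomial in `t`. -/
theorem strata_poly {ι : Type*} [Fintype ι] [DecidableEq ι] (S : ℕ → Finset (ι → ℕ))
    (hadd : ∀ t x v, v ∈ S 1 → (x + v ∈ S (t + 1) ↔ x ∈ S t))
    (hex : ∀ t x, 1 ≤ t → x ∈ S t → ∃ v ∈ S 1, (∀ i, v i ≤ 1) ∧ vecSupp v ⊆ vecSupp x)
    (Z : Finset ι) :
    ∃ p : ℚ[X], ∀ t : ℕ, 1 ≤ t →
      (((S t).filter (vecSupp · = Z)).card : ℚ) = p.eval (t : ℚ) := by
  induction Z using Finset.strongInduction with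
  | H Z ih =>
  by_cases hZ : ∃ v ∈ S 1, (∀ i, v i ≤ 1) ∧ vecSupp v ⊆ Z
  swap
  · -- Without such a `v`, the stratum is empty in every positive degree.
    refine ⟨0, fun t ht => ?_⟩
    rw [Finset.filter_eq_empty_iff.2]
    · simp
    · rintro x hx rfl
      exact hZ (hex t x ht hx)
  obtain ⟨v, hv, hv1, hvZ⟩ := hZ
  choose! p hp using ih
  set T : Finset (Finset ι) := Z.ssubsets.filter (Z \ vecSupp v ⊆ ·) with hT
  apply exists_poly_of_recursion _ (∑ W ∈ T, p W)
  intro t ht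
  have hTZ : Z ∉ T := by simp [hT]
  have key : ((S (t + 1)).filter (vecSupp · = Z)).card =
      ∑ W ∈ insert Z T, ((S t).filter (vecSupp · = W)).card := by
    have h1 : ((S (t + 1)).filter (vecSupp · = Z)).card =
        ((S t).filter (fun y => vecSupp y ∈ insert Z T)).card := by
      symm
      refine Finset.card_bij (fun y _ => y + v) ?_ ?_ ?_
      · intro y hy
        simp only [Finset.mem_filter, hT, Finset.mem_insert, Finset.mem_ssubsets] at hy ⊢
        refine ⟨(hadd t y v hv).2 hy.1, ?_⟩
        have hsub : vecSupp y ⊆ Z ∧ Z \ vecSupp v ⊆ vecSupp y := by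
          rcases hy.2 with h | h
          · rw [h]; exact ⟨subset_rfl, Finset.sdiff_subset⟩
          · exact ⟨h.1.subset, h.2⟩
        ext i
        have a1 := @hsub.1 i
        have a2 := @hsub.2 i
        have a3 := @hvZ i
        simp only [Finset.mem_sdiff, mem_vecSupp] at a1 a2 a3
        simp only [mem_vecSupp, Pi.add_apply]
        constructor
        · intro h
          by_cases hyi : y i = 0
          · exact a3 (by omega)
          · exact a1 hyi
        · intro h
          by_cases hvi : v i = 0
          · have := a2 ⟨h, by simpa using hvi⟩
            omega
          · omega
      · intro y _ y' _ h
        exact add_right_cancel h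
      · intro x hx
        simp only [Finset.mem_filter] at hx
        have hle : ∀ i, v i ≤ x i := by
          intro i
          have a1 := hv1 i
          by_cases hvi : v i = 0
          · omega
          · have : i ∈ vecSupp x := hx.2 ▸ hvZ (mem_vecSupp.2 hvi)
            rw [mem_vecSupp] at this
            omega
        have hxv : (x - v) + v = x := by
          ext i
          have := hle i
          simp only [Pi.add_apply, Pi.sub_apply]
          omega
        refine ⟨x - v, ?_, hxv⟩
        have hs1 : vecSupp (x - v) ⊆ Z := by
          intro i hi
          rw [mem_vecSupp, Pi.sub_apply] at hi
          rw [← hx.2, mem_vecSupp]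
          omega
        have hs2 : Z \ vecSupp v ⊆ vecSupp (x - v) := by
          intro i hi
          rw [← hx.2] at hi
          simp only [Finset.mem_sdiff, mem_vecSupp, Pi.sub_apply] at hi ⊢
          omega
        simp only [Finset.mem_filter, hT, Finset.mem_insert, Finset.mem_ssubsets]
        refine ⟨(hadd t _ v hv).1 (by rw [hxv]; exact hx.1), ?_⟩
        rcases hs1.eq_or_ssubset with h | h
        · exact Or.inl h
        · exact Or.inr ⟨h, hs2⟩
    rw [h1, Finset.card_eq_sum_card_fiberwise (f := vecSupp) (t := insert Z T)]
    · refine Finset.sum_congr rfl fun W hW => ?_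
      rw [Finset.filter_filter]
      congr 1
      refine Finset.filter_congr fun y _ => ⟨fun h => h.2, fun h => ⟨h ▸ hW, h⟩⟩
    · intro y hy
      exact (Finset.mem_filter.1 hy).2
  rw [key, Finset.sum_insert hTZ, Nat.cast_add, Nat.cast_sum, eval_finsetSum]
  congr 1
  refine Finset.sum_congr rfl fun W hW => hp W ?_ t ht
  exact Finset.mem_ssubsets.1 (Finset.mem_filter.1 hW).1

/-! ### Integrality of bipartite flows -/

/-- If a nonempty set `E` of positions meets each row and each column in zero or at least two
positions, then some nonzero matrix supported on `E` has all line sums zero. This is a dimension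
count: `E` has at least as many elements as there are lines meeting it, and one of the line sum
equations is redundant. -/
theorem exists_circulation {m n : ℕ} (E : Finset (Fin m × Fin n)) (hE : E.Nonempty)
    (hr : ∀ p ∈ E, 2 ≤ (E.filter (fun q => q.1 = p.1)).card)
    (hc : ∀ p ∈ E, 2 ≤ (E.filter (fun q => q.2 = p.2)).card) :
    ∃ y : Fin m × Fin n → ℝ, y ≠ 0 ∧ (∀ p ∉ E, y p = 0) ∧
      (∀ i, ∑ j, y (i, j) = 0) ∧ (∀ j, ∑ i, y (i, j) = 0) := by
  classical
  obtain ⟨p₀, hp₀⟩ := hE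
  set R := E.image Prod.fst with hR
  set C := E.image Prod.snd with hC
  have hRc : 2 * R.card ≤ E.card := Finset.mul_card_image_le_card E 2 (by
    intro b hb
    obtain ⟨p, hp, rfl⟩ := Finset.mem_image.1 hb
    exact hr p hp)
  have hCc : 2 * C.card ≤ E.card := Finset.mul_card_image_le_card E 2 (by
    intro b hb
    obtain ⟨p, hp, rfl⟩ := Finset.mem_image.1 hb
    exact hc p hp)
  have hp₀C : p₀.2 ∈ C := Finset.mem_image_of_mem _ hp₀
  let ext : (E → ℝ) →ₗ[ℝ] (Fin m × Fin n → ℝ) :=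
    { toFun := fun y p => if h : p ∈ E then y ⟨p, h⟩ else 0
      map_add' := by
        intro x y; ext p; by_cases h : p ∈ E <;> simp [h]
      map_smul' := by
        intro x y; ext p; by_cases h : p ∈ E <;> simp [h] }
  have hext : ∀ y p, p ∉ E → ext y p = 0 := by
    intro y p h; simp [ext, h]
  have hext' : ∀ y (p : E), ext y p = y p := by
    intro y p; simp [ext]
  let L : (E → ℝ) →ₗ[ℝ] ((R → ℝ) × (↥(C.erase p₀.2) → ℝ)) :=
    { toFun := fun y => (fun i => ∑ j, ext y (i, j), fun j => ∑ i, ext y (i, j))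
      map_add' := by
        intro x y
        simp only [map_add, Pi.add_apply, Finset.sum_add_distrib]
        rfl
      map_smul' := by
        intro a y
        simp only [map_smul, Pi.smul_apply, smul_eq_mul, ← Finset.mul_sum]
        rfl }
  have hker : LinearMap.ker L ≠ ⊥ := by
    apply LinearMap.ker_ne_bot_of_finrank_lt
    simp only [Module.finrank_prod, Module.finrank_fintype_fun_eq_card, Fintype.card_coe,
      Finset.card_erase_of_mem hp₀C]
    have : 0 < C.card := Finset.card_pos.2 ⟨_, hp₀C⟩
    omega
  obtain ⟨y, hy, hy0⟩ := Submodule.exists_mem_ne_zero_of_ne_bot hker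
  rw [LinearMap.mem_ker] at hy
  have hrow : ∀ i, ∑ j, ext y (i, j) = 0 := by
    intro i
    by_cases hi : i ∈ R
    · exact congrFun (congrArg Prod.fst hy) ⟨i, hi⟩
    · refine Finset.sum_eq_zero fun j _ => hext y _ fun h => hi ?_
      exact Finset.mem_image.2 ⟨_, h, rfl⟩
  have hcol' : ∀ j, j ≠ p₀.2 → ∑ i, ext y (i, j) = 0 := by
    intro j hj
    by_cases hjC : j ∈ C
    · exact congrFun (congrArg Prod.snd hy) ⟨j, Finset.mem_erase.2 ⟨hj, hjC⟩⟩
    · refine Finset.sum_eq_zero fun i _ => hext y _ fun h => hjC ?_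
      exact Finset.mem_image.2 ⟨_, h, rfl⟩
  refine ⟨ext y, ?_, hext y, hrow, fun j => ?_⟩
  · intro h
    apply hy0
    ext p
    rw [← hext' y p, h]
    rfl
  · by_cases hj : j = p₀.2
    · -- The omitted column equation follows, as both families have the same total.
      have htot : ∑ j, ∑ i, ext y (i, j) = 0 := by
        rw [Finset.sum_comm]
        exact Finset.sum_eq_zero fun i _ => hrow i
      rw [Finset.sum_eq_single p₀.2 (fun b _ hb => hcol' b hb) (by simp)] at htot
      rw [hj]
      exact htot
    · exact hcol' j hj

/-- If numbers in `[0, 1]` have an integral sum, then not exactly one of them is fractional. -/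
theorem two_le_card_frac {α : Type*} [Fintype α] [DecidableEq α] (f : α → ℝ) (z : ℤ)
    (h01 : ∀ a, f a ≠ 0 → f a ≠ 1 → 0 < f a ∧ f a < 1)
    (hsum : ∑ a, f a = z) (a : α) (ha : f a ≠ 0 ∧ f a ≠ 1) :
    2 ≤ (Finset.univ.filter (fun b => f b ≠ 0 ∧ f b ≠ 1)).card := by
  by_contra hlt
  have hone : ∀ b, b ≠ a → f b = 0 ∨ f b = 1 := by
    intro b hb
    by_contra hcon
    push Not at hcon
    apply hlt
    have : ({a, b} : Finset α) ⊆ Finset.univ.filter (fun b => f b ≠ 0 ∧ f b ≠ 1) := by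
      intro c hc
      simp only [Finset.mem_insert, Finset.mem_singleton] at hc
      rcases hc with rfl | rfl <;> simp [ha, hcon]
    calc 2 = ({a, b} : Finset α).card := (Finset.card_pair hb.symm).symm
      _ ≤ _ := Finset.card_le_card this
  have h1 : ∑ b ∈ Finset.univ.erase a, f b =
      ((∑ b ∈ Finset.univ.erase a, (if f b = 0 then 0 else 1 : ℤ) : ℤ) : ℝ) := by
    push_cast
    refine Finset.sum_congr rfl fun b hb => ?_
    rcases hone b (Finset.ne_of_mem_erase hb) with h | h <;> simp [h]
  rw [← Finset.add_sum_erase _ _ (Finset.mem_univ a), h1] at hsum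
  set w := ∑ b ∈ Finset.univ.erase a, (if f b = 0 then 0 else 1 : ℤ)
  obtain ⟨p, q⟩ := h01 a ha.1 ha.2
  have e : f a = ((z - w : ℤ) : ℝ) := by push_cast; linarith
  rw [e] at p q
  have p' : 0 < z - w := by exact_mod_cast p
  have q' : z - w < 1 := by exact_mod_cast q
  omega

/-- A matrix with entries in `[0, 1]` and integral line sums can be rounded to a `0/1`-matrix with
the same line sums, leaving the entries `0` and `1` unchanged. The rounding is an extreme point of
the polytope of all admissible matrices: a fractional entry would give a circulation on the
fractional positions along which one can move in both directions. -/
theorem exists_rounding {m n : ℕ} (Y : Fin m × Fin n → ℝ) (hY : ∀ p, 0 ≤ Y p ∧ Y p ≤ 1)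
    (ρ : Fin m → ℤ) (σ : Fin n → ℤ)
    (hr : ∀ i, ∑ j, Y (i, j) = ρ i) (hc : ∀ j, ∑ i, Y (i, j) = σ j) :
    ∃ X : Fin m × Fin n → ℝ, (∀ p, X p = 0 ∨ X p = 1) ∧
      (∀ i, ∑ j, X (i, j) = ρ i) ∧ (∀ j, ∑ i, X (i, j) = σ j) ∧
      (∀ p, Y p = 0 → X p = 0) ∧ (∀ p, Y p = 1 → X p = 1) := by
  classical
  let K : Set (Fin m × Fin n → ℝ) := {X | X ∈ Set.Icc 0 1 ∧
      (∀ i, ∑ j, X (i, j) = ρ i) ∧ (∀ j, ∑ i, X (i, j) = σ j) ∧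
      (∀ p, Y p = 0 → X p = 0) ∧ (∀ p, Y p = 1 → X p = 1)}
  have hK : IsCompact K := by
    have e1 := isClosed_iInter fun i => isClosed_eq
      (f := fun X : Fin m × Fin n → ℝ => ∑ j, X (i, j)) (g := fun _ => (ρ i : ℝ))
      (by fun_prop) (by fun_prop)
    have e2 := isClosed_iInter fun j => isClosed_eq
      (f := fun X : Fin m × Fin n → ℝ => ∑ i, X (i, j)) (g := fun _ => (σ j : ℝ))
      (by fun_prop) (by fun_prop)
    have e3 := isClosed_iInter fun p => isClosed_iInter fun _ : Y p = 0 => isClosed_eq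
      (f := fun X : Fin m × Fin n → ℝ => X p) (g := fun _ => (0 : ℝ))
      (by fun_prop) (by fun_prop)
    have e4 := isClosed_iInter fun p => isClosed_iInter fun _ : Y p = 1 => isClosed_eq
      (f := fun X : Fin m × Fin n → ℝ => X p) (g := fun _ => (1 : ℝ))
      (by fun_prop) (by fun_prop)
    convert (isCompact_Icc (a := (0 : Fin m × Fin n → ℝ)) (b := 1)).inter_right
      (e1.inter (e2.inter (e3.inter e4))) using 1
    ext X
    simp [K, -Set.mem_Icc]
    tauto
  have hne : K.Nonempty :=
    ⟨Y, ⟨fun p => (hY p).1, fun p => (hY p).2⟩, hr, hc, fun _ h => h, fun _ h => h⟩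
  obtain ⟨X, hXK, hX⟩ := hK.extremePoints_nonempty hne
  obtain ⟨h01, hXr, hXc, hX0, hX1⟩ := hXK
  have h01' : ∀ p, X p ≠ 0 → X p ≠ 1 → 0 < X p ∧ X p < 1 := fun p h h' =>
    ⟨lt_of_le_of_ne (h01.1 p) (Ne.symm h), lt_of_le_of_ne (h01.2 p) h'⟩
  refine ⟨X, ?_, hXr, hXc, hX0, hX1⟩
  by_contra hcon
  push Not at hcon
  obtain ⟨p₁, hp₁⟩ := hcon
  set E : Finset (Fin m × Fin n) := Finset.univ.filter (fun p => X p ≠ 0 ∧ X p ≠ 1) with hE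
  have hmem : ∀ p, p ∈ E ↔ X p ≠ 0 ∧ X p ≠ 1 := by simp [hE]
  obtain ⟨y, hy0, hyE, hyr, hyc⟩ := exists_circulation E ⟨p₁, (hmem _).2 hp₁⟩ (by
      intro p hp
      have := two_le_card_frac (fun j => X (p.1, j)) (ρ p.1) (fun j => h01' _) (hXr _) p.2
        ((hmem _).1 hp)
      refine this.trans (Finset.card_le_card_of_injOn (fun j => (p.1, j)) ?_ ?_)
      · intro j hj
        simpa [hmem] using hj
      · intro a _ b _ h
        exact (Prod.mk.inj h).2) (by
      intro p hp
      have := two_le_card_frac (fun i => X (i, p.2)) (σ p.2) (fun j => h01' _) (hXc _) p.1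
        ((hmem _).1 hp)
      refine this.trans (Finset.card_le_card_of_injOn (fun i => (i, p.2)) ?_ ?_)
      · intro j hj
        simpa [hmem] using hj
      · intro a _ b _ h
        exact (Prod.mk.inj h).1)
  -- For small `ε`, both `X + ε y` and `X - ε y` stay in the polytope.
  have hmove : ∀ᶠ ε : ℝ in nhds 0, X + ε • y ∈ K := by
    have hev : ∀ᶠ ε : ℝ in nhds 0, ∀ p, 0 ≤ X p + ε * y p ∧ X p + ε * y p ≤ 1 := by
      rw [Filter.eventually_all]
      intro p
      by_cases hp : p ∈ E
      · obtain ⟨ha, hb⟩ := h01' p ((hmem p).1 hp).1 ((hmem p).1 hp).2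
        have hcont : Filter.Tendsto (fun ε : ℝ => X p + ε * y p) (nhds 0) (nhds (X p)) := by
          have : Continuous (fun ε : ℝ => X p + ε * y p) := by fun_prop
          simpa using this.tendsto 0
        filter_upwards [hcont (Icc_mem_nhds ha hb)] with ε hε
        exact hε
      · simp only [hyE p hp, mul_zero, add_zero]
        exact Filter.Eventually.of_forall fun _ => ⟨h01.1 p, h01.2 p⟩
    filter_upwards [hev] with ε hε
    refine ⟨⟨fun p => (hε p).1, fun p => (hε p).2⟩, ?_, ?_, ?_, ?_⟩
    · intro i
      simp [Finset.sum_add_distrib, ← Finset.mul_sum, hyr, hXr]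
    · intro j
      simp [Finset.sum_add_distrib, ← Finset.mul_sum, hyc, hXc]
    · intro p hp
      have : p ∉ E := fun h => ((hmem p).1 h).1 (hX0 p hp)
      simp [hyE p this, hX0 p hp]
    · intro p hp
      have : p ∉ E := fun h => ((hmem p).1 h).2 (hX1 p hp)
      simp [hyE p this, hX1 p hp]
  have hmove' : ∀ᶠ ε : ℝ in nhds 0, X + (-ε) • y ∈ K := by
    have : Filter.Tendsto (fun ε : ℝ => -ε) (nhds 0) (nhds 0) := by
      simpa using (continuous_neg.tendsto (0 : ℝ))
    exact this.eventually hmove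
  obtain ⟨ε, ⟨h1, h2⟩, hεpos⟩ := (((hmove.and hmove').filter_mono nhdsWithin_le_nhds).and
    (self_mem_nhdsWithin : Set.Ioi (0 : ℝ) ∈ nhdsWithin 0 (Set.Ioi 0))).exists
  have hmid := hX h1 h2 ⟨1 / 2, 1 / 2, by norm_num, by norm_num, by norm_num, by
    ext p; simp; ring⟩
  apply hy0
  have hz : ε • y = 0 := by simpa using hmid
  exact (smul_eq_zero.1 hz).resolve_left (ne_of_gt hεpos)

/-! ### The cells of the dilated polytope -/

/-- The lattice points at height `t` of the (closed) cell of matrices `A` with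
`t * f ≤ A ≤ t * (f + 1)` entrywise, all row sums `t * r` and all column sums `t * s`. A point is
recorded by its distances to the two bounds: `x (p, false)` is `A p - t * f p` and `x (p, true)` is
`t * (f p + 1) - A p`. -/
def cell {m n : ℕ} (r s : ℕ) (f : Fin m → Fin n → ℕ) (t : ℕ) :
    Finset ((Fin m × Fin n) × Bool → ℕ) :=
  (Fintype.piFinset fun _ => Finset.range (t + 1)).filter fun x =>
    (∀ p, x (p, false) + x (p, true) = t) ∧
    (∀ i, ∑ j, (t * f i j + x ((i, j), false)) = t * r) ∧
    (∀ j, ∑ i, (t * f i j + x ((i, j), false)) = t * s)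

theorem mem_cell {m n r s : ℕ} {f : Fin m → Fin n → ℕ} {t : ℕ}
    {x : (Fin m × Fin n) × Bool → ℕ} :
    x ∈ cell r s f t ↔ (∀ p, x (p, false) + x (p, true) = t) ∧
    (∀ i, ∑ j, (t * f i j + x ((i, j), false)) = t * r) ∧
    (∀ j, ∑ i, (t * f i j + x ((i, j), false)) = t * s) := by
  simp only [cell, Finset.mem_filter, Fintype.mem_piFinset, Finset.mem_range, and_iff_right_iff_imp]
  rintro ⟨h, -⟩ ⟨p, b⟩
  have := h p
  cases b <;> omega

theorem sum_shift {α : Type*} [Fintype α] (t r : ℕ) (f x v : α → ℕ)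
    (hv : ∑ a, (1 * f a + v a) = 1 * r) :
    ∑ a, ((t + 1) * f a + (x a + v a)) = (t + 1) * r ↔ ∑ a, (t * f a + x a) = t * r := by
  have : ∑ a, ((t + 1) * f a + (x a + v a)) =
      ∑ a, (t * f a + x a) + ∑ a, (1 * f a + v a) := by
    rw [← Finset.sum_add_distrib]
    exact Finset.sum_congr rfl fun a _ => by ring
  rw [this, hv, add_mul, add_left_inj]

theorem cell_add {m n : ℕ} (r s : ℕ) (f : Fin m → Fin n → ℕ) (t : ℕ)
    (x v : (Fin m × Fin n) × Bool → ℕ) (hv : v ∈ cell r s f 1) :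
    x + v ∈ cell r s f (t + 1) ↔ x ∈ cell r s f t := by
  rw [mem_cell] at hv
  obtain ⟨h1, h2, h3⟩ := hv
  rw [mem_cell, mem_cell]
  simp only [Pi.add_apply]
  refine and_congr (forall_congr' fun p => ?_) (and_congr (forall_congr' fun i => ?_)
    (forall_congr' fun j => ?_))
  · have := h1 p
    omega
  · exact sum_shift t r _ (fun j => x ((i, j), false)) _ (h2 i)
  · exact sum_shift t s _ (fun i => x ((i, j), false)) _ (h3 j)

theorem sum_normalize {α : Type*} [Fintype α] {t r : ℕ} (ht : 1 ≤ t) {f x : α → ℕ}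
    (h : ∑ a, (t * f a + x a) = t * r) :
    ∑ a, (x a : ℝ) / t = (((r : ℤ) - ∑ a, (f a : ℤ) : ℤ) : ℝ) := by
  have ht' : (t : ℝ) ≠ 0 := by positivity
  have h' : (t : ℝ) * ∑ a, (f a : ℝ) + ∑ a, (x a : ℝ) = t * r := by
    have := congrArg (Nat.cast : ℕ → ℝ) h
    push_cast at this
    rwa [Finset.sum_add_distrib, ← Finset.mul_sum] at this
  rw [← Finset.sum_div]
  push_cast
  rw [div_eq_iff ht']
  linarith

theorem sum_rounded {α : Type*} [Fintype α] {r : ℕ} {f v : α → ℕ} {X : α → ℝ}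
    (hv : ∀ a, (v a : ℝ) = X a)
    (h : ∑ a, X a = (((r : ℤ) - ∑ a, (f a : ℤ) : ℤ) : ℝ)) :
    ∑ a, (1 * f a + v a) = 1 * r := by
  have : ((∑ a, (1 * f a + v a) : ℕ) : ℝ) = ((1 * r : ℕ) : ℝ) := by
    push_cast
    simp only [one_mul, hv, Finset.sum_add_distrib, h]
    push_cast
    ring
  exact_mod_cast this

/-- Each point of a cell has in its support that of a `0/1`-point of the cell at height one. -/
theorem cell_exists {m n : ℕ} (r s : ℕ) (f : Fin m → Fin n → ℕ) (t : ℕ)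
    (x : (Fin m × Fin n) × Bool → ℕ) (ht : 1 ≤ t) (hx : x ∈ cell r s f t) :
    ∃ v ∈ cell r s f 1, (∀ i, v i ≤ 1) ∧ vecSupp v ⊆ vecSupp x := by
  classical
  rw [mem_cell] at hx
  obtain ⟨h1, h2, h3⟩ := hx
  have ht' : (0 : ℝ) < t := by exact_mod_cast ht
  obtain ⟨X, hX, hXr, hXc, hX0, hX1⟩ := exists_rounding (fun p => (x (p, false) : ℝ) / t)
    (fun p => ⟨by positivity, by
      rw [div_le_one ht']
      have := h1 p
      exact_mod_cast (by omega : x (p, false) ≤ t)⟩)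
    (fun i => (r : ℤ) - ∑ j, (f i j : ℤ)) (fun j => (s : ℤ) - ∑ i, (f i j : ℤ))
    (fun i => sum_normalize ht (h2 i)) (fun j => sum_normalize ht (h3 j))
  let w : Fin m × Fin n → ℕ := fun p => if X p = 0 then 0 else 1
  have hw : ∀ p, (w p : ℝ) = X p := by
    intro p
    rcases hX p with h | h <;> simp [w, h]
  have hw1 : ∀ p, w p ≤ 1 := by
    intro p
    simp only [w]
    split_ifs <;> omega
  let v : (Fin m × Fin n) × Bool → ℕ := fun q => if q.2 then 1 - w q.1 else w q.1
  have hvf : ∀ p, v (p, false) = w p := fun p => by simp [v]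
  have hvt : ∀ p, v (p, true) = 1 - w p := fun p => by simp [v]
  refine ⟨v, mem_cell.2 ⟨fun p => ?_, fun i => ?_, fun j => ?_⟩, ?_, ?_⟩
  · have := hw1 p
    rw [hvf, hvt]
    omega
  · simp only [hvf]
    exact sum_rounded (fun j => hw (i, j)) (hXr i)
  · simp only [hvf]
    exact sum_rounded (fun i => hw (i, j)) (hXc j)
  · rintro ⟨p, b⟩
    have := hw1 p
    cases b
    · rw [hvf]; exact this
    · rw [hvt]; omega
  · rintro ⟨p, b⟩ hp
    rw [mem_vecSupp] at hp ⊢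
    intro h0
    cases b
    · apply hp
      rw [hvf]
      have : X p = 0 := hX0 p (by simp [h0])
      simp [w, this]
    · apply hp
      rw [hvt]
      have hxt : x (p, false) = t := by have := h1 p; omega
      have : X p = 1 := hX1 p (by simp only [hxt]; exact div_self ht'.ne')
      simp [w, this]

/-! ### Counting in the dilated polytope -/

/-- The `m × n` matrices of natural numbers with row sums `t * r` and column sums `t * s`. The bound on
the entries, which the row sums imply, only serves to make this a finset. -/
def dilate (m n r s t : ℕ) : Finset (Fin m → Fin n → ℕ) :=
  (Fintype.piFinset fun _ => Fintype.piFinset fun _ => Finset.range (t * r + 1)).filter fun A =>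
    (∀ i, ∑ j, A i j = t * r) ∧ (∀ j, ∑ i, A i j = t * s)

theorem mem_dilate {m n r s t : ℕ} {A : Fin m → Fin n → ℕ} :
    A ∈ dilate m n r s t ↔ (∀ i, ∑ j, A i j = t * r) ∧ (∀ j, ∑ i, A i j = t * s) := by
  simp only [dilate, Finset.mem_filter, Fintype.mem_piFinset, Finset.mem_range,
    and_iff_right_iff_imp]
  rintro ⟨h, -⟩ i j
  have := Finset.single_le_sum (f := A i) (fun _ _ => Nat.zero_le _) (Finset.mem_univ j)
  rw [h i] at this
  omega

/-- The coordinates of `A` in the cell given by its quotients modulo `t`: the remainder of each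
entry, and the complement of the remainder to `t`. -/
def remVec {m n : ℕ} (t : ℕ) (A : Fin m → Fin n → ℕ) : (Fin m × Fin n) × Bool → ℕ :=
  fun q => if q.2 then t - A q.1.1 q.1.2 % t else A q.1.1 q.1.2 % t

open Polynomial in
theorem dilate_poly (m n r s : ℕ) :
    ∃ p : ℚ[X], ∀ t : ℕ, 1 ≤ t → ((dilate m n r s t).card : ℚ) = p.eval (t : ℚ) := by
  classical
  choose p hp using fun f : Fin m → Fin n → ℕ => strata_poly (cell r s f)
    (cell_add r s f) (cell_exists r s f)
  -- The slack `t - A % t` never vanishes, so only strata `Z` containing all `(q, true)` occur; this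
  -- makes each matrix belong to exactly one cell.
  let Q : Finset ((Fin m → Fin n → ℕ) × Finset ((Fin m × Fin n) × Bool)) :=
    (Fintype.piFinset fun _ => Fintype.piFinset fun _ => Finset.range (r + 1)) ×ˢ
      Finset.univ.filter fun Z => ∀ q, (q, true) ∈ Z
  refine ⟨∑ c ∈ Q, p c.1 c.2, fun t ht => ?_⟩
  have hrf : ∀ (A : Fin m → Fin n → ℕ) q, remVec t A (q, false) = A q.1 q.2 % t :=
    fun A q => by simp [remVec]
  have hrt : ∀ (A : Fin m → Fin n → ℕ) q, remVec t A (q, true) = t - A q.1 q.2 % t :=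
    fun A q => by simp [remVec]
  rw [Finset.card_eq_sum_card_fiberwise
    (f := fun A => ((fun i j => A i j / t : Fin m → Fin n → ℕ), vecSupp (remVec t A))) (t := Q)]
  · rw [Nat.cast_sum, eval_finsetSum]
    refine Finset.sum_congr rfl fun c hc => ?_
    obtain ⟨f, Z⟩ := c
    have hZ : ∀ q, (q, true) ∈ Z := by
      have := (Finset.mem_product.1 hc).2
      exact (Finset.mem_filter.1 this).2
    rw [← hp f Z t ht]
    congr 1
    refine Finset.card_bij (fun A _ => remVec t A) ?_ ?_ ?_
    · intro A hA
      simp only [Finset.mem_filter, Prod.mk.injEq] at hA ⊢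
      obtain ⟨hA, rfl, hAZ⟩ := hA
      rw [mem_dilate] at hA
      refine ⟨mem_cell.2 ⟨fun q => ?_, fun i => ?_, fun j => ?_⟩, hAZ⟩
      · have := Nat.mod_lt (A q.1 q.2) ht
        rw [hrf, hrt]
        omega
      · simp only [hrf, Nat.div_add_mod]
        exact hA.1 i
      · simp only [hrf, Nat.div_add_mod]
        exact hA.2 j
    · intro A hA B hB hAB
      simp only [Finset.mem_filter, Prod.mk.injEq] at hA hB
      funext i j
      have e1 : A i j / t = B i j / t :=
        congrFun (congrFun (hA.2.1.trans hB.2.1.symm) i) j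
      have e2 : A i j % t = B i j % t := by
        have := congrFun hAB ((i, j), false)
        rwa [hrf, hrf] at this
      rw [← Nat.div_add_mod (A i j) t, e1, e2, Nat.div_add_mod]
    · intro x hx
      rw [Finset.mem_filter, mem_cell] at hx
      obtain ⟨⟨h1, h2, h3⟩, rfl⟩ := hx
      have hlt : ∀ q, x (q, false) < t := by
        intro q
        have a1 := h1 q
        have a2 := mem_vecSupp.1 (hZ q)
        omega
      have hmod : ∀ q : Fin m × Fin n, (t * f q.1 q.2 + x (q, false)) % t = x (q, false) := by
        intro q
        rw [Nat.mul_add_mod, Nat.mod_eq_of_lt (hlt q)]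
      have hrem : remVec t (fun i j => t * f i j + x ((i, j), false)) = x := by
        funext ⟨q, b⟩
        cases b
        · rw [hrf]
          exact hmod q
        · rw [hrt]
          have a1 := h1 q
          have a2 := hmod q
          change t - (t * f q.1 q.2 + x (q, false)) % t = x (q, true)
          rw [a2]
          omega
      refine ⟨fun i j => t * f i j + x ((i, j), false), ?_, hrem⟩
      simp only [Finset.mem_filter, Prod.mk.injEq, hrem, and_true]
      refine ⟨mem_dilate.2 ⟨h2, h3⟩, ?_⟩
      funext i j
      rw [Nat.mul_add_div ht, Nat.div_eq_of_lt (hlt (i, j)), add_zero]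
  · intro A hA
    have hA' := mem_dilate.1 hA
    simp only [Q, Finset.coe_product, Set.mem_prod, Finset.mem_coe, Fintype.mem_piFinset,
      Finset.mem_range, Finset.mem_filter, Finset.mem_univ, true_and]
    refine ⟨fun i j => ?_, fun q => ?_⟩
    · have := Finset.single_le_sum (f := A i) (fun _ _ => Nat.zero_le _) (Finset.mem_univ j)
      rw [hA'.1 i] at this
      exact Nat.lt_succ_of_le (Nat.div_le_of_le_mul this)
    · rw [mem_vecSupp, hrt]
      have := Nat.mod_lt (A q.1 q.2) ht
      omega

theorem dilate_card_le (m n r s t : ℕ) :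
    (dilate (m + 1) (n + 1) r s t).card ≤ (t * r + 1) ^ (m * n) := by
  classical
  have hcard : (Fintype.piFinset fun _ : Fin m × Fin n => Finset.range (t * r + 1)).card =
      (t * r + 1) ^ (m * n) := by
    simp
  rw [← hcard]
  refine Finset.card_le_card_of_injOn (fun A q => A q.1.castSucc q.2.castSucc) ?_ ?_
  · intro A hA
    have hA' := (Finset.mem_filter.1 hA).1
    simp only [Fintype.mem_piFinset] at hA'
    simp only [Finset.mem_coe, Fintype.mem_piFinset]
    exact fun q => hA' _ _
  · intro A hA B hB hAB
    have hA' := mem_dilate.1 hA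
    have hB' := mem_dilate.1 hB
    have h0 : ∀ (i : Fin m) (j : Fin n), A i.castSucc j.castSucc = B i.castSucc j.castSucc :=
      fun i j => congrFun hAB (i, j)
    have h1 : ∀ (i : Fin m) (j : Fin (n + 1)), A i.castSucc j = B i.castSucc j := by
      intro i j
      refine Fin.lastCases ?_ (h0 i) j
      have e := (hA'.1 i.castSucc).trans (hB'.1 i.castSucc).symm
      rw [Fin.sum_univ_castSucc, Fin.sum_univ_castSucc] at e
      simpa only [h0, add_right_inj] using e
    funext i j
    refine Fin.lastCases ?_ (fun i => h1 i j) i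
    have e := (hA'.2 j).trans (hB'.2 j).symm
    rw [Fin.sum_univ_castSucc, Fin.sum_univ_castSucc] at e
    simpa only [h1, add_right_inj] using e

/-! ### The degree bound and the conclusion -/

open Polynomial in
theorem degree_le_of_growth (p : ℝ[X]) (r D : ℕ)
    (h : ∀ t : ℕ, 1 ≤ t → |p.eval (t : ℝ)| ≤ (t * r + 1 : ℝ) ^ D) : p.natDegree ≤ D := by
  by_contra hlt
  push Not at hlt
  set q : ℝ[X] := (C (r : ℝ) * X + 1) ^ D with hq
  have hqe : ∀ x : ℝ, q.eval x = (x * r + 1) ^ D := by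
    intro x
    simp [hq, mul_comm]
  have hq0 : q ≠ 0 := by
    intro h0
    have := hqe 0
    simp [h0] at this
  have hqd : q.natDegree ≤ D := by
    have h1 : (C (r : ℝ) * X + 1 : ℝ[X]).natDegree ≤ 1 := natDegree_linear_le (b := 1)
    calc q.natDegree ≤ D * (C (r : ℝ) * X + 1 : ℝ[X]).natDegree := natDegree_pow_le
      _ ≤ D * 1 := Nat.mul_le_mul_left _ h1
      _ = D := mul_one D
  have hdeg : q.degree < p.degree := degree_lt_degree (by omega)
  have hT := (abs_div_tendsto_atTop_atTop_of_degree_gt p q hdeg hq0).comp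
    tendsto_natCast_atTop_atTop
  obtain ⟨t, ht2, ht1⟩ := ((hT.eventually_gt_atTop 1).and (Filter.eventually_ge_atTop 1)).exists
  have hpos : (0 : ℝ) < (t * r + 1 : ℝ) ^ D := by positivity
  simp only [Function.comp_apply, hqe, abs_div, abs_of_pos hpos] at ht2
  rw [lt_div_iff₀ hpos, one_mul] at ht2
  exact absurd (h t ht1) (not_le.2 ht2)

open Polynomial in

/-- Ehrhart pseudo-polynomiality of the counting function `H_{m,n}`:
there are real constants `c₀, …, c_D`, `D = (m-1)(n-1)`, such that for every positive
integer `z`, if `z₀ = n / gcd(m,n)` divides `z` then `H_{m,n}(z) = ∑ᵢ cᵢ z^{D-i}`,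
and otherwise `H_{m,n}(z) = 0`. -/
theorem ehrhart_pseudopolynomial
    (m n : ℕ) (hm : 1 ≤ m) (hn : 1 ≤ n)
    (D : ℕ) (hD : D = (m - 1) * (n - 1))
    (z₀ : ℕ) (hz₀ : z₀ = n / Nat.gcd m n)
    (H : ℕ → ℕ)
    (hH : ∀ z : ℕ, H z = Nat.card {A : Matrix (Fin m) (Fin n) ℕ //
      (∀ i, ∑ j, A i j = z) ∧ (∀ j, n * ∑ i, A i j = z * m)}) :
    ∃ c : ℕ → ℝ, ∀ z : ℕ, 0 < z →
      (z₀ ∣ z → (H z : ℝ) = ∑ i ∈ Finset.range (D + 1), c i * (z : ℝ) ^ (D - i)) ∧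
      (¬ z₀ ∣ z → H z = 0) := by
  set g := Nat.gcd m n with hg
  have hgpos : 0 < g := Nat.gcd_pos_of_pos_left n hm
  set s := m / g with hs
  have hm' : m = g * s := (Nat.mul_div_cancel' (Nat.gcd_dvd_left m n)).symm
  have hn' : n = g * z₀ := by rw [hz₀, Nat.mul_div_cancel' (Nat.gcd_dvd_right m n)]
  have hcop : Nat.Coprime s z₀ := by
    rw [hz₀]
    exact Nat.coprime_div_gcd_div_gcd hgpos
  have hz₀pos : 0 < z₀ := Nat.pos_of_ne_zero (by rintro h; rw [h] at hn'; omega)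
  have hcount : ∀ t, H (t * z₀) = (dilate m n z₀ s t).card := by
    intro t
    refine (hH _).trans (Nat.subtype_card (dilate m n z₀ s t) ?_)
    intro A
    rw [mem_dilate]
    refine and_congr Iff.rfl (forall_congr' fun j => ?_)
    have e : t * z₀ * m = n * (t * s) := by
      calc t * z₀ * m = t * z₀ * (g * s) := by rw [← hm']
        _ = (g * z₀) * (t * s) := by ring
        _ = n * (t * s) := by rw [← hn']
    rw [e]
    exact (Nat.mul_right_inj (by omega)).symm
  obtain ⟨p, hp⟩ := dilate_poly m n z₀ s
  have hpR : ∀ t : ℕ, 1 ≤ t →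
      ((dilate m n z₀ s t).card : ℝ) = (p.map (algebraMap ℚ ℝ)).eval (t : ℝ) := by
    intro t ht
    have := congrArg (algebraMap ℚ ℝ) (hp t ht)
    rw [eval_natCast_map]
    simpa using this
  set P := p.map (algebraMap ℚ ℝ)
  have hPdeg : P.natDegree ≤ D := by
    apply degree_le_of_growth P z₀ D
    intro t ht
    rw [← hpR t ht, Nat.abs_cast]
    obtain ⟨m, rfl⟩ := Nat.exists_eq_add_of_le' hm
    obtain ⟨n, rfl⟩ := Nat.exists_eq_add_of_le' hn
    rw [hD]
    exact_mod_cast dilate_card_le m n z₀ s t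
  refine ⟨fun i => P.coeff (D - i) / (z₀ : ℝ) ^ (D - i), fun z hz => ⟨?_, ?_⟩⟩
  · rintro ⟨t, rfl⟩
    have ht : 1 ≤ t := Nat.pos_of_mul_pos_left hz
    rw [mul_comm z₀ t, hcount, hpR t ht, eval_eq_sum_range' (Nat.lt_succ_of_le hPdeg),
      ← Finset.sum_range_reflect]
    refine Finset.sum_congr rfl fun i _ => ?_
    have hz' : (z₀ : ℝ) ≠ 0 := by positivity
    push_cast
    rw [mul_pow]
    field_simp
  · intro hdvd
    rw [hH]
    have : IsEmpty {A : Matrix (Fin m) (Fin n) ℕ //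
        (∀ i, ∑ j, A i j = z) ∧ (∀ j, n * ∑ i, A i j = z * m)} := by
      refine ⟨fun A => hdvd ?_⟩
      have h := A.2.2 ⟨0, hn⟩
      set k := ∑ i, A.1 i ⟨0, hn⟩
      have h' : z₀ * k = z * s := by
        apply Nat.eq_of_mul_eq_mul_left hgpos
        calc g * (z₀ * k) = n * k := by rw [← mul_assoc, ← hn']
          _ = z * m := h
          _ = g * (z * s) := by nth_rewrite 1 [hm']; ring
      exact hcop.symm.dvd_of_dvd_mul_right ⟨k, h'.symm⟩
    exact Nat.card_of_isEmpty
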